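/- arXiv:2506.00896 — 2 statements merged into one kernel-verified Lean document; each statement's English description precedes it below -/
import Mathlib

section
/- Let X be a finite set equipped with a metric ρ. If Y₁ ⊆ X and Y₂ ⊆ X are both clusters and Y₁ ∩ Y₂ ≠ ∅, then Y₁ ⊆ Y₂ or Y₂ ⊆ Y₁. -/
/-- A subset `Y` of a metric space is a *cluster* if it contains at least two
elements and for any `a, b ∈ Y` and `c ∉ Y` one has `ρ(a,b) < ρ(b,c)`. -/
def IsCluster {X : Type*} [MetricSpace X] (Y : Set X) : Prop :=
  Y.Nontrivial ∧ ∀ a ∈ Y, ∀ b ∈ Y, ∀ c ∉ Y, dist a b < dist b c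

/-- If two clusters of a finite metric space intersect non-trivially, then one of them
contains the other one. -/
theorem clusters_nested {X : Type*} [Fintype X] [MetricSpace X]
    {Y₁ Y₂ : Set X} (h₁ : IsCluster Y₁) (h₂ : IsCluster Y₂)
    (h : (Y₁ ∩ Y₂).Nonempty) : Y₁ ⊆ Y₂ ∨ Y₂ ⊆ Y₁ := by
  by_contra! hne
  obtain ⟨b, hb₁, hb₂⟩ := h
  obtain ⟨a, ha₁, ha₂⟩ := Set.not_subset.mp hne.1
  obtain ⟨c, hc₂, hc₁⟩ := Set.not_subset.mp hne.2
  -- For `a ∈ Y₁ \ Y₂`, `b ∈ Y₁ ∩ Y₂`, `c ∈ Y₂ \ Y₁`, the two cluster conditions at `b`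
  -- give both `ρ(a,b) < ρ(b,c)` and `ρ(c,b) < ρ(b,a)`.
  have hac := h₁.2 a ha₁ b hb₁ c hc₁
  have hca := h₂.2 c hc₂ b hb₂ a ha₂
  rw [dist_comm c b, dist_comm b a] at hca
  exact lt_asymm hac hca
end

section
/- Let n ≥ 1 and let f : ℝⁿ → ℝ be twice continuously differentiable. Then for every x ∈ ℝⁿ, lim_{r → 0⁺} (2/r²) · ( (1/λ(B(x,r))) ∫_{B(x,r)} f(y) dλ(y) − f(x) ) = Δf(x)/(n+2), where λ denotes Lebesgue measure on ℝⁿ. That is, the measured Laplacian defined via mean values over small balls coincides with 1/(n+2) times the Euclidean Laplacian. -/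
/-!
Rescaling `B(x, r)` to the unit ball `B`, the mean value of `f` becomes
`λ(B)⁻¹ ∫_B f (x + r y) dy`. Expand `f (x + r y) = f x + r L y + (r² / 2) Q(y, y) + o(r²)`, uniformly
for `y ∈ B` (`taylor_two_isLittleO`), where `L` and `Q` are the first and second derivatives of `f`
at `x`. The linear term integrates to zero by symmetry (`integral_ball_clm`). Coordinate reflections
and swaps are isometries preserving `B`, so `∫_B y_i y_j = 0` for `i ≠ j` and the integrals
`∫_B y_i²` are all equal; their sum `∫_B ‖y‖² = n / (n + 2) λ(B)` comes from polar coordinates.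
Hence the mean of `Q(y, y)` is `tr Q / (n + 2)` (`integral_ball_quadratic`), which is the limit.
-/

open MeasureTheory

/-- The Laplacian `Δf = Σᵢ ∂²f/∂xᵢ²` of a function on Euclidean space. -/
noncomputable def laplacian {n : ℕ} (f : EuclideanSpace ℝ (Fin n) → ℝ)
    (x : EuclideanSpace ℝ (Fin n)) : ℝ :=
  ∑ i : Fin n,
    iteratedFDeriv ℝ 2 f x ![EuclideanSpace.single i 1, EuclideanSpace.single i 1]

/-- Second-order Taylor expansion with Peano remainder. By symmetry of the second derivative the
remainder has derivative `fderiv ℝ f (x + h) - L - Q h = o(‖h‖)` at `h`, where `L` and `Q` are the first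
and second derivatives of `f` at `x`, and the mean value inequality on the ball of radius `‖h‖`
gives `o(‖h‖ ^ 2)`. -/
theorem taylor_two_isLittleO {E : Type*} [NormedAddCommGroup E] [NormedSpace ℝ E]
    {f : E → ℝ} (hf : ContDiff ℝ 2 f) (x : E) :
    (fun h : E => f (x + h) - f x - fderiv ℝ f x h - 1 / 2 * fderiv ℝ (fderiv ℝ f) x h h)
      =o[nhds 0] fun h => ‖h‖ ^ 2 := by
  set L := fderiv ℝ f x
  set Q := fderiv ℝ (fderiv ℝ f) x
  have hsymm : ∀ v w, Q v w = Q w v := fun v w =>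
    (hf.contDiffAt.isSymmSndFDerivAt (by simp)) v w
  have hd : ∀ h, HasFDerivAt (fun h : E => f (x + h) - f x - L h - 1 / 2 * Q h h)
      (fderiv ℝ f (x + h) - L - Q h) h := by
    intro h
    have h1 : HasFDerivAt (fun h : E => f (x + h)) (fderiv ℝ f (x + h)) h := by
      have := (hf.differentiable (by norm_num) (x + h)).hasFDerivAt
      exact this.comp h ((hasFDerivAt_id h).const_add x)
    have h2 : HasFDerivAt (fun h : E => Q h h) _ h := Q.hasFDerivAt.clm_apply (hasFDerivAt_id h)
    refine (((h1.sub_const (f x)).sub L.hasFDerivAt).sub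
      (h2.const_mul (1 / 2))).congr_fderiv ?_
    ext v
    simp [hsymm v h]
    ring
  have hD : HasFDerivAt (fderiv ℝ f) Q x :=
    ((hf.fderiv_right (m := 1) (by norm_num)).differentiable (by norm_num) x).hasFDerivAt
  rw [hasFDerivAt_iff_isLittleO_nhds_zero] at hD
  rw [Asymptotics.isLittleO_iff] at hD ⊢
  intro c hc
  obtain ⟨δ, hδ, hball⟩ := Metric.eventually_nhds_iff_ball.1 (hD hc)
  refine Metric.eventually_nhds_iff_ball.2 ⟨δ, hδ, fun h hh => ?_⟩
  have hb : ∀ k ∈ Metric.closedBall (0 : E) ‖h‖, ‖fderiv ℝ f (x + k) - L - Q k‖ ≤ c * ‖h‖ := by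
    intro k hk
    have hk' : ‖k‖ ≤ ‖h‖ := by simpa using hk
    refine (hball k ?_).trans (by gcongr)
    simp at hh ⊢
    exact hk'.trans_lt hh
  have := (convex_closedBall (0 : E) ‖h‖).norm_image_sub_le_of_norm_hasFDerivWithin_le
    (fun k _ => (hd k).hasFDerivWithinAt) hb (x := 0) (y := h) (by simp) (by simp)
  simpa [pow_two, mul_assoc] using this

theorem integral_ball_comp_isometry {n : ℕ}
    (e : EuclideanSpace ℝ (Fin n) ≃ₗᵢ[ℝ] EuclideanSpace ℝ (Fin n))
    (g : EuclideanSpace ℝ (Fin n) → ℝ) :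
    ∫ y in Metric.ball (0 : EuclideanSpace ℝ (Fin n)) 1, g (e y) =
      ∫ y in Metric.ball (0 : EuclideanSpace ℝ (Fin n)) 1, g y := by
  have := e.measurePreserving.setIntegral_preimage_emb
    e.toHomeomorph.measurableEmbedding g (Metric.ball 0 1)
  rw [← this]
  simp

/-- The first moments of the unit ball vanish, by the symmetry `y ↦ -y`. -/
theorem integral_ball_clm {n : ℕ} (L : EuclideanSpace ℝ (Fin n) →L[ℝ] ℝ) :
    ∫ y in Metric.ball (0 : EuclideanSpace ℝ (Fin n)) 1, L y = 0 := by
  have := integral_ball_comp_isometry (LinearIsometryEquiv.neg ℝ)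
    (fun y : EuclideanSpace ℝ (Fin n) => L y)
  simp [integral_neg] at this
  linarith

/-- The mixed second moments of the unit ball vanish, by the reflection changing the sign of the
`i`-th coordinate. -/
theorem integral_ball_coord_mul_coord {n : ℕ} {i j : Fin n} (hij : i ≠ j) :
    ∫ y in Metric.ball (0 : EuclideanSpace ℝ (Fin n)) 1, y i * y j = 0 := by
  let e : EuclideanSpace ℝ (Fin n) ≃ₗᵢ[ℝ] EuclideanSpace ℝ (Fin n) :=
    LinearIsometryEquiv.piLpCongrRight 2 (fun k : Fin n =>
      if k = i then LinearIsometryEquiv.neg ℝ else LinearIsometryEquiv.refl ℝ ℝ)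
  have := integral_ball_comp_isometry e (fun y : EuclideanSpace ℝ (Fin n) => y i * y j)
  simp [e, hij.symm, integral_neg] at this
  linarith

/-- The pure second moments of the unit ball agree, by the isometry swapping two coordinates. -/
theorem integral_ball_coord_sq_eq {n : ℕ} (i j : Fin n) :
    ∫ y in Metric.ball (0 : EuclideanSpace ℝ (Fin n)) 1, y i ^ 2 =
      ∫ y in Metric.ball (0 : EuclideanSpace ℝ (Fin n)) 1, y j ^ 2 := by
  have := integral_ball_comp_isometry
    (LinearIsometryEquiv.piLpCongrLeft 2 ℝ ℝ (Equiv.swap i j))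
    (fun y : EuclideanSpace ℝ (Fin n) => y j ^ 2)
  rw [← this]
  simp [LinearIsometryEquiv.piLpCongrLeft_apply, Equiv.piCongrLeft']

theorem integrableOn_ball {n : ℕ} {g : EuclideanSpace ℝ (Fin n) → ℝ} (hg : Continuous g)
    (a : EuclideanSpace ℝ (Fin n)) (r : ℝ) :
    IntegrableOn g (Metric.ball a r) :=
  (hg.continuousOn.integrableOn_compact (isCompact_closedBall a r)).mono_set
    Metric.ball_subset_closedBall

/-- Integration in polar coordinates, reducing to `∫ t in 0..1, t ^ (n + 1) = 1 / (n + 2)`. -/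
theorem integral_ball_norm_sq {n : ℕ} (hn : 1 ≤ n) :
    ∫ y in Metric.ball (0 : EuclideanSpace ℝ (Fin n)) 1, ‖y‖ ^ 2 =
      n / (n + 2) * volume.real (Metric.ball (0 : EuclideanSpace ℝ (Fin n)) 1) := by
  have : Nontrivial (EuclideanSpace ℝ (Fin n)) := by
    have : Nonempty (Fin n) := ⟨⟨0, hn⟩⟩
    infer_instance
  have h := integral_fun_norm_addHaar (volume : Measure (EuclideanSpace ℝ (Fin n)))
    ((Set.Iio (1 : ℝ)).indicator fun t => t ^ 2)
  have h1 : ∫ y : EuclideanSpace ℝ (Fin n), (Set.Iio (1 : ℝ)).indicator (fun t => t ^ 2) ‖y‖ =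
      ∫ y in Metric.ball (0 : EuclideanSpace ℝ (Fin n)) 1, ‖y‖ ^ 2 := by
    rw [← integral_indicator measurableSet_ball]
    congr 1 with y
    simp [Set.indicator]
  have h2 : ∫ t in Set.Ioi (0 : ℝ), t ^ (n - 1) • (Set.Iio (1 : ℝ)).indicator (fun t => t ^ 2) t
      = 1 / (n + 2) := by
    have : ∀ t : ℝ, t ^ (n - 1) • (Set.Iio (1 : ℝ)).indicator (fun t => t ^ 2) t =
        (Set.Iio (1 : ℝ)).indicator (fun t => t ^ (n + 1)) t := by
      intro t
      by_cases ht : t < 1 <;> simp [ht, ← pow_add]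
      congr 1; omega
    simp_rw [this]
    rw [setIntegral_indicator measurableSet_Iio, Set.Ioi_inter_Iio, ← integral_Ioc_eq_integral_Ioo,
      ← intervalIntegral.integral_of_le zero_le_one, integral_pow]
    push_cast
    simp
    ring
  rw [h1, finrank_euclideanSpace_fin, h2] at h
  rw [h]
  simp
  ring

/-- Each pure second moment is a share `1 / n` of the integral of `‖y‖ ^ 2`. -/
theorem integral_ball_coord_sq {n : ℕ} (hn : 1 ≤ n) (i : Fin n) :
    ∫ y in Metric.ball (0 : EuclideanSpace ℝ (Fin n)) 1, y i ^ 2 =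
      volume.real (Metric.ball (0 : EuclideanSpace ℝ (Fin n)) 1) / (n + 2) := by
  have h := integral_ball_norm_sq hn
  simp_rw [EuclideanSpace.real_norm_sq_eq] at h
  rw [integral_finsetSum _ fun j _ => integrableOn_ball (by fun_prop) 0 1,
    Finset.sum_congr rfl fun j _ => integral_ball_coord_sq_eq j i] at h
  have hn' : (n : ℝ) ≠ 0 := by positivity
  simp at h
  field_simp at h ⊢
  exact h

/-- A quadratic form integrates over the unit ball to its trace times `λ(B) / (n + 2)`. -/
theorem integral_ball_quadratic {n : ℕ} (hn : 1 ≤ n)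
    (Q : EuclideanSpace ℝ (Fin n) →L[ℝ] EuclideanSpace ℝ (Fin n) →L[ℝ] ℝ) :
    ∫ y in Metric.ball (0 : EuclideanSpace ℝ (Fin n)) 1, Q y y =
      volume.real (Metric.ball (0 : EuclideanSpace ℝ (Fin n)) 1) / (n + 2) *
        ∑ i, Q (EuclideanSpace.single i 1) (EuclideanSpace.single i 1) := by
  have hQ : ∀ y : EuclideanSpace ℝ (Fin n), Q y y = ∑ i, ∑ j,
      (y i * y j) * Q (EuclideanSpace.single i 1) (EuclideanSpace.single j 1) := by
    intro y
    have hy : y = ∑ i, y i • EuclideanSpace.single i (1 : ℝ) := by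
      ext k
      simp [Finset.sum_apply, Pi.single_apply]
    conv_lhs => rw [hy]
    simp [Finset.mul_sum, mul_assoc]
    rw [Finset.sum_comm]
    refine Finset.sum_congr rfl fun i _ => Finset.sum_congr rfl fun j _ => by ring
  rw [setIntegral_congr_fun measurableSet_ball fun y _ => hQ y]
  rw [integral_finsetSum _ fun j _ => integrableOn_ball (by fun_prop) 0 1, Finset.mul_sum]
  refine Finset.sum_congr rfl fun i _ => ?_
  rw [integral_finsetSum _ fun j _ => integrableOn_ball (by fun_prop) 0 1,
    Finset.sum_eq_single i _ (by simp)]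
  · have h := integral_ball_coord_sq hn i
    simp_rw [pow_two] at h
    rw [integral_mul_const, h]
  · intro j _ hj
    rw [integral_mul_const, integral_ball_coord_mul_coord hj.symm, zero_mul]

/-- The mean value over `B(x, r)`, rescaled to an integral over the unit ball. -/
theorem average_ball_eq {n : ℕ} (f : EuclideanSpace ℝ (Fin n) → ℝ)
    (x : EuclideanSpace ℝ (Fin n)) {r : ℝ} (hr : 0 < r) :
    ⨍ y in Metric.ball x r, f y =
      (volume.real (Metric.ball (0 : EuclideanSpace ℝ (Fin n)) 1))⁻¹ *
        ∫ y in Metric.ball (0 : EuclideanSpace ℝ (Fin n)) 1, f (x + r • y) := by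
  have h1 := Measure.setIntegral_comp_smul_of_pos (volume : Measure (EuclideanSpace ℝ (Fin n)))
    (fun y => f (x + y)) (Metric.ball 0 1) hr
  have h2 : ∫ y in Metric.ball (0 : EuclideanSpace ℝ (Fin n)) r, f (x + y) =
      ∫ y in Metric.ball x r, f y := by
    have := (measurePreserving_add_left (volume : Measure (EuclideanSpace ℝ (Fin n)))
      x).setIntegral_preimage_emb
      (measurableEmbedding_addLeft x) f (Metric.ball x r)
    rw [← this]
    simp
  rw [smul_unitBall hr.ne', Real.norm_of_nonneg hr.le, h2] at h1
  have h3 : volume.real (Metric.ball x r) =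
      r ^ Module.finrank ℝ (EuclideanSpace ℝ (Fin n)) *
        volume.real (Metric.ball (0 : EuclideanSpace ℝ (Fin n)) 1) := by
    rw [measureReal_def, measureReal_def, Measure.addHaar_ball_of_pos _ _ hr, ENNReal.toReal_mul,
      ENNReal.toReal_ofReal (by positivity)]
  rw [setAverage_eq, h1, h3, mul_inv, smul_eq_mul, smul_eq_mul]
  ring

/-- For a C² function `f : ℝⁿ → ℝ` (n ≥ 1) and any point `x`, the measured Laplacian
defined via mean values over small balls exists and equals `Δf(x)/(n+2)`:
`lim_{r→0⁺} (2/r²)·(⨍_{B(x,r)} f dλ − f(x)) = Δf(x)/(n+2)`. -/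
theorem measured_laplacian_eq {n : ℕ} (hn : 1 ≤ n)
    (f : EuclideanSpace ℝ (Fin n) → ℝ) (hf : ContDiff ℝ 2 f)
    (x : EuclideanSpace ℝ (Fin n)) :
    Filter.Tendsto
      (fun r : ℝ => 2 / r ^ 2 * ((⨍ y in Metric.ball x r, f y ∂volume) - f x))
      (nhdsWithin 0 (Set.Ioi 0))
      (nhds (laplacian f x / ((n : ℝ) + 2))) := by
  have hT := taylor_two_isLittleO hf x
  have hlap : laplacian f x = ∑ i, fderiv ℝ (fderiv ℝ f) x
      (EuclideanSpace.single i 1) (EuclideanSpace.single i 1) := by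
    simp [laplacian, iteratedFDeriv_two_apply]
  have hfc : Continuous f := hf.continuous
  have hQint := integral_ball_quadratic hn (fderiv ℝ (fderiv ℝ f) x)
  rw [← hlap] at hQint
  set L := fderiv ℝ f x
  set Q := fderiv ℝ (fderiv ℝ f) x
  have hLint := integral_ball_clm L
  set R := fun h => f (x + h) - f x - L h - 1 / 2 * Q h h with hR
  have hRc : Continuous R := by fun_prop
  have hV : 0 < volume.real (Metric.ball (0 : EuclideanSpace ℝ (Fin n)) 1) :=
    ENNReal.toReal_pos (Metric.measure_ball_pos _ _ one_pos).ne' measure_ball_lt_top.ne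
  set V := volume.real (Metric.ball (0 : EuclideanSpace ℝ (Fin n)) 1)
  -- The linear term integrates to zero and the quadratic form `Q` to `V / (n + 2)` times its trace,
  -- so only the Taylor remainder separates the quotient from its limit.
  have key : ∀ r : ℝ, 0 < r →
      2 / r ^ 2 * ((⨍ y in Metric.ball x r, f y ∂volume) - f x) - laplacian f x / (n + 2) =
        2 / r ^ 2 * (V⁻¹ * ∫ y in Metric.ball (0 : EuclideanSpace ℝ (Fin n)) 1, R (r • y)) := by
    intro r hr
    have hexp : ∀ y, f (x + r • y) = R (r • y) + (f x + (r * L y + r ^ 2 / 2 * Q y y)) := by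
      intro y
      simp [hR]
      ring
    rw [average_ball_eq f x hr, setIntegral_congr_fun measurableSet_ball fun y _ => hexp y,
      integral_add (integrableOn_ball (by fun_prop) 0 1) (integrableOn_ball (by fun_prop) 0 1),
      integral_add (integrableOn_ball (by fun_prop) 0 1) (integrableOn_ball (by fun_prop) 0 1),
      integral_add (integrableOn_ball (by fun_prop) 0 1) (integrableOn_ball (by fun_prop) 0 1),
      integral_const_mul, integral_const_mul, hLint, hQint, setIntegral_const, smul_eq_mul]
    change 2 / r ^ 2 * (V⁻¹ * (_ + (V * f x + _)) - f x) - _ = _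
    field_simp
    ring
  rw [Metric.tendsto_nhds]
  intro ε hε
  obtain ⟨δ, hδ, hball⟩ :=
    Metric.eventually_nhds_iff_ball.1 (Asymptotics.isLittleO_iff.1 hT (show 0 < ε / 4 by positivity))
  filter_upwards [Ioo_mem_nhdsGT hδ] with r ⟨hr, hrδ⟩
  have hbound : ‖∫ y in Metric.ball (0 : EuclideanSpace ℝ (Fin n)) 1, R (r • y)‖ ≤
      ε / 4 * r ^ 2 * V := by
    refine norm_setIntegral_le_of_norm_le_const measure_ball_lt_top fun y hy => ?_
    have hy' : ‖y‖ < 1 := by simpa using hy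
    have hry : ‖r • y‖ ≤ r := by
      rw [norm_smul, Real.norm_of_nonneg hr.le]
      exact mul_le_of_le_one_right hr.le hy'.le
    refine (hball (r • y) (by simpa using hry.trans_lt hrδ)).trans ?_
    rw [Real.norm_of_nonneg (by positivity)]
    gcongr
  rw [Real.dist_eq, key r hr, abs_mul, abs_mul, abs_of_pos (by positivity : 0 < 2 / r ^ 2),
    abs_of_pos (inv_pos.2 hV), ← Real.norm_eq_abs]
  calc _ ≤ 2 / r ^ 2 * (V⁻¹ * (ε / 4 * r ^ 2 * V)) := by gcongr
    _ = ε / 2 := by field_simp; ring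
    _ < ε := by linarith
end
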